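/- Let E = (r_1, …, r_n) be a finite sequence of rows with all entries integers, and suppose for some index i that the consecutive pair (r_i, r_{i+1}) satisfies the alternating sign condition, i.e. η_{i+1} = (−1)^{C(r_i)} η_i. Then the dual signs satisfy η̂_i = (−1)^{C(r_{i+1})} η̂_{i+1}; that is, in dual(E) (where r̂_{i+1} immediately precedes r̂_i, and C(r̂_j) = C(r_j)), the consecutive pair (r̂_{i+1}, r̂_i) also satisfies the alternating sign condition. -/

import Mathlib

/-- A row `r = (A, B, l, η)`: the data of an extended segment `([A, B], l, η)`
(with the constraints `B ≤ A` and `η ∈ {1, -1}` imposed as hypotheses via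
`IsRow`). All entries are integers. -/
structure Row where
  A : ℤ
  B : ℤ
  l : ℤ
  eta : ℤ
deriving DecidableEq

instance : Inhabited Row := ⟨⟨0, 0, 0, 1⟩⟩

/-- `(-1)^n` for an integer `n` (only the parity of `n` matters). -/
def epow (n : ℤ) : ℤ := (-1) ^ n.natAbs

/-- `a(r) = A + B + 1`. -/
def Row.a (r : Row) : ℤ := r.A + r.B + 1

/-- `b(r) = A - B + 1`. -/
def Row.b (r : Row) : ℤ := r.A - r.B + 1

/-- `C(r) = b(r) - 2l(r)`, the number of circles of `r`. -/
def Row.C (r : Row) : ℤ := r.b - 2 * r.l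

/-- The defining constraints on a row: `B ≤ A` and `η ∈ {1, -1}`. -/
def IsRow (r : Row) : Prop := r.B ≤ r.A ∧ (r.eta = 1 ∨ r.eta = -1)

/-- `C(E) = Σ_j C(r_j)` for a sequence of rows `E`. -/
def CE (E : List Row) : ℤ := (E.map Row.C).sum

/-- `α_i = Σ_{j < i} a(r_j)` (the list `E` is 0-indexed here). -/
def alphaSum (E : List Row) (i : ℕ) : ℤ := ((E.take i).map Row.a).sum

/-- `β_i = Σ_{j > i} b(r_j)` (the list `E` is 0-indexed here). -/
def betaSum (E : List Row) (i : ℕ) : ℤ := ((E.drop (i + 1)).map Row.b).sum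

/-- The dual `r̂_i = (A_i, −B_i, l_i + B_i, (−1)^{α_i+β_i} η_i)` of the `i`-th
row of `E`. -/
def dualRow (E : List Row) (i : ℕ) : Row :=
  let r := E.getD i default
  ⟨r.A, -r.B, r.l + r.B, epow (alphaSum E i + betaSum E i) * r.eta⟩

/-- The dual sequence `dual(E) = (r̂_n, …, r̂_1)`. -/
def dualList (E : List Row) : List Row :=
  ((List.range E.length).map (dualRow E)).reverse

/-!
Modulo `2` the three numbers `a(r)`, `b(r)` and `C(r)` agree. Passing from `i` to `i + 1` adds
`a(r_i)` to `α` and removes `b(r_{i+1})` from `β`, so the dualizing sign `(-1)^(α + β)` changes by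
`(-1)^(C(r_i) + C(r_{i+1}))`; the alternating condition on `E` cancels the factor `(-1)^C(r_i)`.
-/

theorem epow_eq_coe_negOnePow (n : ℤ) : epow n = (n.negOnePow : ℤ) :=
  (Int.coe_negOnePow ℤ n).symm

theorem epow_add (m n : ℤ) : epow (m + n) = epow m * epow n := by
  simp only [epow_eq_coe_negOnePow, Int.negOnePow_add, Units.val_mul]

theorem epow_eq_epow_iff {m n : ℤ} : epow m = epow n ↔ Even (m - n) := by
  rw [epow_eq_coe_negOnePow, epow_eq_coe_negOnePow, Units.val_inj, Int.negOnePow_eq_iff]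

theorem epow_mul_self (n : ℤ) : epow n * epow n = 1 := by
  rw [epow_eq_coe_negOnePow, ← Units.val_mul, Int.units_mul_self, Units.val_one]

theorem Row.epow_b (r : Row) : epow r.b = epow r.C :=
  epow_eq_epow_iff.mpr ⟨r.l, by rw [Row.C]; ring⟩

theorem Row.epow_a (r : Row) : epow r.a = epow r.C :=
  epow_eq_epow_iff.mpr ⟨r.B + r.l, by rw [Row.C, Row.a, Row.b]; ring⟩

section DualSign

variable {E : List Row} {i : ℕ}

theorem alphaSum_succ (hi : i < E.length) : alphaSum E (i + 1) = alphaSum E i + E[i].a := by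
  rw [alphaSum, List.map_take, List.sum_take_succ _ _ (by rwa [List.length_map]),
    List.getElem_map, ← List.map_take, alphaSum]

theorem betaSum_eq_add_betaSum_succ (hi : i + 1 < E.length) :
    betaSum E i = E[i + 1].b + betaSum E (i + 1) := by
  rw [betaSum, List.drop_eq_getElem_cons hi, List.map_cons, List.sum_cons, betaSum]

theorem dualRow_eta (hi : i < E.length) :
    (dualRow E i).eta = epow (alphaSum E i + betaSum E i) * E[i].eta := by
  rw [dualRow, List.getD_eq_getElem _ _ hi]

theorem epow_C_mul_epow_alphaSum_add_betaSum_succ (hi : i + 1 < E.length) :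
    epow E[i + 1].C * epow (alphaSum E (i + 1) + betaSum E (i + 1)) =
      epow (E[i]'(Nat.lt_of_succ_lt hi)).C * epow (alphaSum E i + betaSum E i) := by
  rw [alphaSum_succ (Nat.lt_of_succ_lt hi), betaSum_eq_add_betaSum_succ hi]
  simp only [epow_add, Row.epow_a, Row.epow_b]
  ring

end DualSign

/-- Alternating dual (Lemma `Alternating dual`(1)): if the consecutive pair
`(r_i, r_{i+1})` of `E` satisfies the alternating sign condition
`η_{i+1} = (−1)^{C(r_i)} η_i`, then the dual signs satisfy
`η̂_i = (−1)^{C(r_{i+1})} η̂_{i+1}`, i.e. the consecutive pair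
`(r̂_{i+1}, r̂_i)` of `dual(E)` also satisfies the alternating sign condition. -/
theorem alternating_dual (E : List Row) (hE : ∀ r ∈ E, IsRow r)
    (i : ℕ) (hi : i + 1 < E.length)
    (halt : (E.get ⟨i + 1, hi⟩).eta =
      epow ((E.get ⟨i, by omega⟩).C) * (E.get ⟨i, by omega⟩).eta) :
    (dualRow E i).eta = epow ((E.get ⟨i + 1, hi⟩).C) * (dualRow E (i + 1)).eta := by
  have hi' : i < E.length := Nat.lt_of_succ_lt hi
  simp only [List.get_eq_getElem] at halt ⊢
  symm
  calc epow E[i + 1].C * (dualRow E (i + 1)).eta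
      = epow E[i + 1].C * epow (alphaSum E (i + 1) + betaSum E (i + 1)) *
          (epow E[i].C * E[i].eta) := by
        rw [dualRow_eta hi, halt, mul_assoc]
    _ = epow E[i].C * epow (alphaSum E i + betaSum E i) * (epow E[i].C * E[i].eta) := by
        rw [epow_C_mul_epow_alphaSum_add_betaSum_succ hi]
    _ = epow E[i].C * epow E[i].C * (epow (alphaSum E i + betaSum E i) * E[i].eta) := by
        rw [mul_mul_mul_comm]
    _ = (dualRow E i).eta := by
        rw [epow_mul_self, one_mul, dualRow_eta hi']
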